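/- arXiv:2507.18391 — 2 statements merged into one kernel-verified Lean document; each statement's English description precedes it below -/
import Mathlib

section
/- Let q : Ω → Q, a : Ω → A, and r : Ω → R be random variables with finite range on a probability space (Ω, μ), suppose a and r are conditionally independent given q (the Markov chain a ↔ q ↔ r), and let β be a real number with β ≥ 2. Then I[q : r | a] + H[r | (q, a)] ≤ (β · H[r | (q, a)] − H[r | q]) + H[q | a]; that is, the quantity I[q : r | a] + H[r | (q, a)] appearing in the information-theoretic generalization bound is controlled by the IBRO loss L_IB = β · H[r | (q, a)] − H[r | q] up to the data-dependent constant H[q | a]. -/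
/-!
By the definition of conditional mutual information as a difference of entropies,
`I[q : r | a] = H[q | a] - H[q | (r, a)]`, which is at most `H[q | a]` because conditional entropy is
nonnegative (`entropy_le_entropy_prod`). Conditional independence gives
`H[r | (q, a)] = H[r | q]` (`condEntropy_eq_of_condIndepGiven`). Writing `h ≥ 0` for this common
value, the claim reduces to `h ≤ (β - 1) * h`, which holds since `β ≥ 2`.
-/

open MeasureTheory Real
open scoped NNReal ENNReal

/-- Shannon entropy of a finite-range random variable `X` under the measure `μ`. -/
noncomputable def entropy {Ω S : Type*} [MeasurableSpace Ω] [Fintype S]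
    (μ : Measure Ω) (X : Ω → S) : ℝ :=
  ∑ s : S, Real.negMulLog ((μ (X ⁻¹' {s})).toReal)

/-- Conditional Shannon entropy `H[X | Y] = H[(X, Y)] - H[Y]`. -/
noncomputable def condEntropy {Ω S T : Type*} [MeasurableSpace Ω] [Fintype S] [Fintype T]
    (μ : Measure Ω) (X : Ω → S) (Y : Ω → T) : ℝ :=
  entropy μ (fun ω => (X ω, Y ω)) - entropy μ Y

/-- Mutual information `I[X : Y] = H[X] - H[X | Y]`. -/
noncomputable def mutualInfo {Ω S T : Type*} [MeasurableSpace Ω] [Fintype S] [Fintype T]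
    (μ : Measure Ω) (X : Ω → S) (Y : Ω → T) : ℝ :=
  entropy μ X - condEntropy μ X Y

/-- Conditional mutual information `I[X : Y | Z] = H[X|Z] + H[Y|Z] - H[(X,Y)|Z]`. -/
noncomputable def condMutualInfo {Ω S T U : Type*} [MeasurableSpace Ω]
    [Fintype S] [Fintype T] [Fintype U]
    (μ : Measure Ω) (X : Ω → S) (Y : Ω → T) (Z : Ω → U) : ℝ :=
  condEntropy μ X Z + condEntropy μ Y Z - condEntropy μ (fun ω => (X ω, Y ω)) Z

/-- `a` and `r` are conditionally independent given `q` (the Markov chain `a ↔ q ↔ r`):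
conditioned on each value of `q`, the joint distribution of `(a, r)` is the product of the
conditional distributions of `a` and of `r`. -/
def CondIndepGiven {Ω A R Q : Type*} [MeasurableSpace Ω]
    (μ : Measure Ω) (a : Ω → A) (r : Ω → R) (q : Ω → Q) : Prop :=
  ∀ (av : A) (rv : R) (qv : Q),
    μ (a ⁻¹' {av} ∩ r ⁻¹' {rv} ∩ q ⁻¹' {qv}) * μ (q ⁻¹' {qv}) =
      μ (a ⁻¹' {av} ∩ q ⁻¹' {qv}) * μ (r ⁻¹' {rv} ∩ q ⁻¹' {qv})

lemma entropy_eq_neg_sum {Ω S : Type*} [MeasurableSpace Ω] [Fintype S]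
    (μ : Measure Ω) (X : Ω → S) : entropy μ X =
      -∑ s : S, (μ (X ⁻¹' {s})).toReal * Real.log (μ (X ⁻¹' {s})).toReal := by
  rw [← Finset.sum_neg_distrib]
  exact Finset.sum_congr rfl fun s _ => by rw [Real.negMulLog]; ring

/-- The law of `Y` is the second marginal of the law of `(X, Y)`. -/
lemma toReal_preimage_eq_sum {Ω S T : Type*} [MeasurableSpace Ω]
    [MeasurableSpace S] [MeasurableSingletonClass S] [Fintype S]
    (μ : Measure Ω) [IsProbabilityMeasure μ] (X : Ω → S) (hX : Measurable X)
    (Y : Ω → T) (t : T) :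
    (μ (Y ⁻¹' {t})).toReal = ∑ s : S, (μ ((fun ω => (X ω, Y ω)) ⁻¹' {(s, t)})).toReal := by
  have h := sum_measureReal_preimage_singleton (μ := μ.restrict (Y ⁻¹' {t})) (f := X)
    Finset.univ (fun s _ => hX (measurableSet_singleton s))
  simp only [Finset.coe_univ, Set.preimage_univ, measureReal_def, Measure.restrict_apply_univ] at h
  rw [← h]
  refine Finset.sum_congr rfl fun s _ => ?_
  rw [Measure.restrict_apply (hX (measurableSet_singleton s))]
  congr 2
  ext ω
  simp

lemma sum_prod_mul_eq {Ω S T : Type*} [MeasurableSpace Ω]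
    [MeasurableSpace S] [MeasurableSingletonClass S] [Fintype S] [Fintype T]
    (μ : Measure Ω) [IsProbabilityMeasure μ] (X : Ω → S) (hX : Measurable X)
    (Y : Ω → T) (f : T → ℝ) :
    ∑ x : S × T, (μ ((fun ω => (X ω, Y ω)) ⁻¹' {x})).toReal * f x.2
      = ∑ t : T, (μ (Y ⁻¹' {t})).toReal * f t := by
  rw [Fintype.sum_prod_type_right]
  refine Finset.sum_congr rfl fun t _ => ?_
  rw [toReal_preimage_eq_sum μ X hX Y t, Finset.sum_mul]

lemma entropy_comp_equiv {Ω S T : Type*} [MeasurableSpace Ω] [Fintype S] [Fintype T]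
    (μ : Measure Ω) (X : Ω → S) (e : S ≃ T) :
    entropy μ (fun ω => e (X ω)) = entropy μ X := by
  unfold entropy
  rw [← e.sum_comp]
  refine Finset.sum_congr rfl fun s _ => ?_
  congr 3
  ext ω
  simp

/-- `H[Y] ≤ H[(X, Y)]`, equivalently `0 ≤ H[X | Y]`: pointwise `p(s, t) ≤ p(t)`, so
`-log p(t) ≤ -log p(s, t)`, and averaging against `p(s, t)` gives the claim. -/
lemma entropy_le_entropy_prod {Ω S T : Type*} [MeasurableSpace Ω]
    [MeasurableSpace S] [MeasurableSingletonClass S] [Fintype S] [Fintype T]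
    (μ : Measure Ω) [IsProbabilityMeasure μ] (X : Ω → S) (hX : Measurable X) (Y : Ω → T) :
    entropy μ Y ≤ entropy μ (fun ω => (X ω, Y ω)) := by
  have h := sum_prod_mul_eq μ X hX Y (fun t => -Real.log (μ (Y ⁻¹' {t})).toReal)
  have h' : entropy μ Y = ∑ t : T, (μ (Y ⁻¹' {t})).toReal * -Real.log (μ (Y ⁻¹' {t})).toReal :=
    Finset.sum_congr rfl fun t _ => by rw [Real.negMulLog]; ring
  rw [h', ← h]
  unfold entropy
  refine Finset.sum_le_sum fun x _ => ?_
  have hle : (μ ((fun ω => (X ω, Y ω)) ⁻¹' {x})).toReal ≤ (μ (Y ⁻¹' {x.2})).toReal := by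
    refine ENNReal.toReal_mono (measure_ne_top _ _) (measure_mono ?_)
    rintro ω rfl
    rfl
  rcases (ENNReal.toReal_nonneg (a := μ ((fun ω => (X ω, Y ω)) ⁻¹' {x}))).eq_or_lt with h0 | h0
  · simp [← h0]
  · have := mul_le_mul_of_nonneg_left (Real.log_le_log h0 hle) h0.le
    rw [Real.negMulLog]
    linarith

/-- Under the Markov chain `a ↔ q ↔ r`, additionally conditioning `r` on `a` changes nothing:
taking logarithms in `p(r, q, a) p(q) = p(q, a) p(r, q)` and averaging against `p(r, q, a)`
gives `H[(r, q, a)] + H[q] = H[(q, a)] + H[(r, q)]`. -/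
lemma condEntropy_eq_of_condIndepGiven {Ω Q A R : Type*} [MeasurableSpace Ω]
    [MeasurableSpace Q] [MeasurableSingletonClass Q] [Fintype Q]
    [MeasurableSpace A] [MeasurableSingletonClass A] [Fintype A]
    [MeasurableSpace R] [MeasurableSingletonClass R] [Fintype R]
    (μ : Measure Ω) [IsProbabilityMeasure μ]
    (q : Ω → Q) (a : Ω → A) (ha : Measurable a)
    (r : Ω → R) (hr : Measurable r) (hind : CondIndepGiven μ a r q) :
    condEntropy μ r (fun ω => (q ω, a ω)) = condEntropy μ r q := by
  -- The triple is ordered `(a, (r, q))` so that `(r, q)` is its second marginal.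
  have hperm : entropy μ (fun ω => (r ω, (q ω, a ω))) = entropy μ (fun ω => (a ω, (r ω, q ω))) :=
    (entropy_comp_equiv μ (fun ω => (r ω, (q ω, a ω)))
      ((Equiv.prodAssoc R Q A).symm.trans (Equiv.prodComm _ _))).symm
  have hswap : entropy μ (fun ω => (q ω, a ω)) = entropy μ (fun ω => (a ω, q ω)) :=
    (entropy_comp_equiv μ (fun ω => (q ω, a ω)) (Equiv.prodComm _ _)).symm
  -- Marginalization turns averages of logarithms against the law of the triple into entropies.
  have hq' := sum_prod_mul_eq μ r hr q (fun y => Real.log (μ (q ⁻¹' {y})).toReal)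
  have hrq := sum_prod_mul_eq μ a ha (fun ω => (r ω, q ω))
    (fun y => Real.log (μ ((fun ω => (r ω, q ω)) ⁻¹' {y})).toReal)
  have hrq' := sum_prod_mul_eq μ a ha (fun ω => (r ω, q ω))
    (fun y => Real.log (μ (q ⁻¹' {y.2})).toReal)
  have haq := sum_prod_mul_eq μ r hr (fun ω => (a ω, q ω))
    (fun y => Real.log (μ ((fun ω => (a ω, q ω)) ⁻¹' {y})).toReal)
  have haq' : ∑ x : A × R × Q, (μ ((fun ω => (a ω, (r ω, q ω))) ⁻¹' {x})).toReal *
        Real.log (μ ((fun ω => (a ω, q ω)) ⁻¹' {(x.1, x.2.2)})).toReal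
      = ∑ y : A × Q, (μ ((fun ω => (a ω, q ω)) ⁻¹' {y})).toReal *
        Real.log (μ ((fun ω => (a ω, q ω)) ⁻¹' {y})).toReal := by
    rw [← haq, Fintype.sum_prod_type, Fintype.sum_prod_type]
    simp_rw [Fintype.sum_prod_type]
    rw [Finset.sum_comm]
    refine Finset.sum_congr rfl fun y _ => Finset.sum_congr rfl fun x _ =>
      Finset.sum_congr rfl fun z _ => ?_
    congr 3
    ext ω
    simp only [Set.mem_preimage, Set.mem_singleton_iff, Prod.mk.injEq]
    tauto
  have hpt : ∀ x : A × R × Q,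
      (μ ((fun ω => (a ω, (r ω, q ω))) ⁻¹' {x})).toReal *
          Real.log (μ ((fun ω => (a ω, (r ω, q ω))) ⁻¹' {x})).toReal
        + (μ ((fun ω => (a ω, (r ω, q ω))) ⁻¹' {x})).toReal *
          Real.log (μ (q ⁻¹' {x.2.2})).toReal
      = (μ ((fun ω => (a ω, (r ω, q ω))) ⁻¹' {x})).toReal *
          Real.log (μ ((fun ω => (a ω, q ω)) ⁻¹' {(x.1, x.2.2)})).toReal
        + (μ ((fun ω => (a ω, (r ω, q ω))) ⁻¹' {x})).toReal *
          Real.log (μ ((fun ω => (r ω, q ω)) ⁻¹' {x.2})).toReal := by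
    rintro ⟨x, y, z⟩
    have h := congrArg ENNReal.toReal (hind x y z)
    have e1 : a ⁻¹' {x} ∩ r ⁻¹' {y} ∩ q ⁻¹' {z} = (fun ω => (a ω, (r ω, q ω))) ⁻¹' {(x, y, z)} := by
      ext ω; simp [and_assoc]
    have e2 : a ⁻¹' {x} ∩ q ⁻¹' {z} = (fun ω => (a ω, q ω)) ⁻¹' {(x, z)} := by
      ext ω; simp
    have e3 : r ⁻¹' {y} ∩ q ⁻¹' {z} = (fun ω => (r ω, q ω)) ⁻¹' {(y, z)} := by
      ext ω; simp
    rw [ENNReal.toReal_mul, ENNReal.toReal_mul, e1, e2, e3] at h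
    by_cases h0 : (μ ((fun ω => (a ω, (r ω, q ω))) ⁻¹' {(x, y, z)})).toReal = 0
    · simp [h0]
    have hz : (μ (q ⁻¹' {z})).toReal ≠ 0 := by
      intro hz
      refine h0 (le_antisymm (hz ▸ ?_) ENNReal.toReal_nonneg)
      refine ENNReal.toReal_mono (measure_ne_top _ _) (measure_mono ?_)
      rw [← e1]
      exact Set.inter_subset_right
    have hne := mul_ne_zero h0 hz
    rw [h] at hne
    rw [← mul_add, ← mul_add, ← Real.log_mul h0 hz, h,
      Real.log_mul (left_ne_zero_of_mul hne) (right_ne_zero_of_mul hne)]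
  have hsum := Finset.sum_congr (rfl : (Finset.univ : Finset (A × R × Q)) = _) fun x _ => hpt x
  rw [Finset.sum_add_distrib, Finset.sum_add_distrib] at hsum
  unfold condEntropy
  rw [hperm, hswap, entropy_eq_neg_sum, entropy_eq_neg_sum, entropy_eq_neg_sum, entropy_eq_neg_sum]
  linarith

/-- **Central step of the IBRO generalization bound.**
If `a` and `r` are conditionally independent given `q` (the Markov chain `a ↔ q ↔ r`)
and `β ≥ 2`, then `I[q : r | a] + H[r | (q, a)] ≤ (β·H[r | (q, a)] - H[r | q]) + H[q | a]`,
i.e. the quantity `I[q : r | a] + H[r | (q, a)]` is controlled by the IBRO loss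
`L_IB = β·H[r | (q, a)] - H[r | q]` up to the data-dependent constant `H[q | a]`. -/
theorem ibro_generalization_step {Ω Q A R : Type*} [MeasurableSpace Ω]
    [MeasurableSpace Q] [MeasurableSingletonClass Q] [Fintype Q]
    [MeasurableSpace A] [MeasurableSingletonClass A] [Fintype A]
    [MeasurableSpace R] [MeasurableSingletonClass R] [Fintype R]
    (μ : Measure Ω) [IsProbabilityMeasure μ]
    (q : Ω → Q) (hq : Measurable q)
    (a : Ω → A) (ha : Measurable a)
    (r : Ω → R) (hr : Measurable r)
    (hind : CondIndepGiven μ a r q)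
    (β : ℝ) (hβ : 2 ≤ β) :
    condMutualInfo μ q r a + condEntropy μ r (fun ω => (q ω, a ω)) ≤
      (β * condEntropy μ r (fun ω => (q ω, a ω)) - condEntropy μ r q)
        + condEntropy μ q a := by
  have hI : entropy μ (fun ω => (r ω, a ω)) ≤ entropy μ (fun ω => ((q ω, r ω), a ω)) := by
    refine (entropy_le_entropy_prod μ q hq (fun ω => (r ω, a ω))).trans_eq ?_
    exact entropy_comp_equiv μ (fun ω => ((q ω, r ω), a ω)) (Equiv.prodAssoc Q R A)
  have hnonneg : 0 ≤ condEntropy μ r q := sub_nonneg.2 (entropy_le_entropy_prod μ r hr q)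
  rw [condEntropy_eq_of_condIndepGiven μ q a ha r hr hind]
  have hmul : 0 ≤ (β - 2) * condEntropy μ r q := mul_nonneg (by linarith) hnonneg
  have hMI : condMutualInfo μ q r a ≤ condEntropy μ q a := by
    unfold condMutualInfo condEntropy
    linarith
  linarith
end

section
/- Let q : Ω → Q, a : Ω → A, and o₁, …, o_T : Ω → O be random variables with finite range on a probability space (Ω, μ), write r = (o₁, …, o_T) : Ω → O^T, and let β ≥ 0 be a real number. Then the IBRO objective admits the token-level upper bound I[q : r] − β · I[r : a] ≤ ∑_{t=1}^{T} ( β · H[o_t | (o₁, …, o_{t−1}, q, a)] − H[o_t | (o₁, …, o_{t−1}, q)] ) + (1 − β) · H[r] + β · H[q | a]. -/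
/-!
Expanding all quantities into joint entropies, the token sums telescope by the chain rule
(`sum_condEntropy_prefix`): `∑ H[o_t | o_{<t}, Z] = H[r, Z] - H[Z]` for `Z = q` and `Z = (q, a)`.
After cancellation the claim becomes `β * H[r, a] ≤ β * H[r, q, a]`, which holds because applying
a function cannot increase entropy (`entropy_comp_le`); this in turn is subadditivity of
`x ↦ -x log x` on nonnegative reals, summed over the fibres of the function.
-/

open MeasureTheory Real
open scoped NNReal ENNReal

lemma negMulLog_sum_le {ι : Type*} (s : Finset ι) (p : ι → ℝ) (hp : ∀ i ∈ s, 0 ≤ p i) :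
    Real.negMulLog (∑ i ∈ s, p i) ≤ ∑ i ∈ s, Real.negMulLog (p i) := by
  have h : Real.negMulLog (∑ i ∈ s, p i) = ∑ i ∈ s, -p i * Real.log (∑ j ∈ s, p j) := by
    rw [← Finset.sum_mul, Finset.sum_neg_distrib, Real.negMulLog]
  rw [h]
  refine Finset.sum_le_sum fun i hi => ?_
  rcases (hp i hi).eq_or_lt with h0 | h0
  · simp [← h0]
  · have hlog := Real.log_le_log h0 (Finset.single_le_sum hp hi)
    rw [Real.negMulLog]
    nlinarith

/-- Applying a function to a finite-range random variable does not increase its entropy. -/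
lemma entropy_comp_le {Ω S U : Type*} [MeasurableSpace Ω] [MeasurableSpace S]
    [MeasurableSingletonClass S] [Fintype S] [Fintype U]
    (μ : Measure Ω) [IsProbabilityMeasure μ] {X : Ω → S} (hX : Measurable X) (g : S → U) :
    entropy μ (fun ω => g (X ω)) ≤ entropy μ X := by
  classical
  unfold entropy
  rw [← Finset.sum_fiberwise Finset.univ g (fun s => Real.negMulLog ((μ (X ⁻¹' {s})).toReal))]
  refine Finset.sum_le_sum fun u _ => ?_
  have h : (μ ((fun ω => g (X ω)) ⁻¹' {u})).toReal
      = ∑ s with g s = u, (μ (X ⁻¹' {s})).toReal := by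
    rw [← ENNReal.toReal_sum (fun s _ => measure_ne_top μ _),
      sum_measure_preimage_singleton _ (fun s _ => hX (measurableSet_singleton s))]
    congr 2
    ext ω
    simp
  rw [h]
  exact negMulLog_sum_le _ _ fun _ _ => ENNReal.toReal_nonneg

/-- Random variables that are functions of each other have the same entropy. -/
lemma entropy_eq_of_comp {Ω S U : Type*} [MeasurableSpace Ω]
    [MeasurableSpace S] [MeasurableSingletonClass S] [Fintype S]
    [MeasurableSpace U] [MeasurableSingletonClass U] [Fintype U]
    (μ : Measure Ω) [IsProbabilityMeasure μ] {X : Ω → S} {Y : Ω → U}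
    (hX : Measurable X) (hY : Measurable Y) (g : S → U) (g' : U → S)
    (hg : ∀ ω, g (X ω) = Y ω) (hg' : ∀ ω, g' (Y ω) = X ω) :
    entropy μ X = entropy μ Y := by
  apply le_antisymm
  · simpa only [hg'] using entropy_comp_le μ hY g'
  · simpa only [hg] using entropy_comp_le μ hX g

/-- The chain rule for the conditional entropy of a sequence given `Z`, in telescoped form. -/
lemma sum_condEntropy_prefix {Ω O S : Type*} [MeasurableSpace Ω]
    [MeasurableSpace O] [MeasurableSingletonClass O] [Fintype O]
    [MeasurableSpace S] [MeasurableSingletonClass S] [Fintype S]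
    (μ : Measure Ω) [IsProbabilityMeasure μ] {Z : Ω → S} (hZ : Measurable Z) (T : ℕ)
    (o : Fin T → Ω → O) (ho : ∀ t, Measurable (o t)) :
    ∑ t : Fin T, condEntropy μ (o t)
        (fun ω => ((fun s : Fin t.val => o (Fin.castLE t.isLt.le s) ω), Z ω))
      = entropy μ (fun ω => ((fun t => o t ω), Z ω)) - entropy μ Z := by
  induction T with
  | zero =>
    have h : entropy μ (fun ω => ((fun t => o t ω), Z ω)) = entropy μ Z :=
      entropy_eq_of_comp μ (by fun_prop) hZ Prod.snd (fun z => (Fin.elim0, z))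
        (fun _ => rfl) (fun _ => Prod.ext (Subsingleton.elim _ _) rfl)
    simp [h]
  | succ n ih =>
    have ih' := ih (fun t => o t.castSucc) (fun t => ho _)
    have hlast : entropy μ (fun ω => (o (Fin.last n) ω, (fun t : Fin n => o t.castSucc ω), Z ω))
        = entropy μ (fun ω => ((fun t => o t ω), Z ω)) :=
      entropy_eq_of_comp μ (by fun_prop) (by fun_prop)
        (fun x => (Fin.snoc (α := fun _ => O) x.2.1 x.1, x.2.2))
        (fun y => (y.1 (Fin.last n), (fun t => y.1 t.castSucc), y.2))
        (fun ω => Prod.ext (Fin.snoc_init_self (α := fun _ => O) (fun t => o t ω)) rfl)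
        (fun _ => rfl)
    rw [Fin.sum_univ_castSucc]
    refine (congrArg₂ (· + ·) ih' (Eq.refl (condEntropy μ (o (Fin.last n))
      (fun ω => ((fun t : Fin n => o t.castSucc ω), Z ω))))).trans ?_
    simp only [condEntropy, hlast]
    ring

/-- **Surrogate IBRO objective (Theorem 1).**
For random variables `q : Ω → Q`, `a : Ω → A` and `o₁, …, o_T : Ω → O` with finite range on a
probability space `(Ω, μ)`, writing `r = (o₁, …, o_T)` and for any real `β ≥ 0`,
`I[q : r] - β·I[r : a]
  ≤ ∑_t (β·H[o_t | (o_{<t}, q, a)] - H[o_t | (o_{<t}, q)]) + (1 - β)·H[r] + β·H[q | a]`. -/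
theorem surrogate_ibro_objective {Ω Q A O : Type*} [MeasurableSpace Ω]
    [MeasurableSpace Q] [MeasurableSingletonClass Q] [Fintype Q]
    [MeasurableSpace A] [MeasurableSingletonClass A] [Fintype A]
    [MeasurableSpace O] [MeasurableSingletonClass O] [Fintype O]
    (μ : Measure Ω) [IsProbabilityMeasure μ] {T : ℕ}
    (q : Ω → Q) (hq : Measurable q)
    (a : Ω → A) (ha : Measurable a)
    (o : Fin T → Ω → O) (ho : ∀ t, Measurable (o t))
    (r : Ω → (Fin T → O)) (hr : r = fun ω t => o t ω)
    (β : ℝ) (hβ : 0 ≤ β) :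
    mutualInfo μ q r - β * mutualInfo μ r a ≤
      (∑ t : Fin T,
        (β * condEntropy μ (o t)
            (fun ω => ((fun s : Fin t.val => o (Fin.castLE t.isLt.le s) ω), q ω, a ω))
          - condEntropy μ (o t)
            (fun ω => ((fun s : Fin t.val => o (Fin.castLE t.isLt.le s) ω), q ω))))
        + (1 - β) * entropy μ r + β * condEntropy μ q a := by
  subst hr
  have hr : Measurable (fun ω t => o t ω) := measurable_pi_lambda _ ho
  have hchain_q := sum_condEntropy_prefix μ hq T o ho
  have hchain_qa := sum_condEntropy_prefix μ (hq.prodMk ha) T o ho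
  have hmono : entropy μ (fun ω => ((fun t => o t ω), a ω))
      ≤ entropy μ (fun ω => ((fun t => o t ω), q ω, a ω)) :=
    entropy_comp_le μ (hr.prodMk (hq.prodMk ha)) (fun x => (x.1, x.2.2))
  have hswap : entropy μ (fun ω => (q ω, fun t => o t ω))
      = entropy μ (fun ω => ((fun t => o t ω), q ω)) :=
    entropy_eq_of_comp μ (hq.prodMk hr) (hr.prodMk hq) Prod.swap Prod.swap
      (fun _ => rfl) (fun _ => rfl)
  rw [Finset.sum_sub_distrib, ← Finset.mul_sum, hchain_q, hchain_qa]
  simp only [mutualInfo, condEntropy, hswap]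
  nlinarith [mul_le_mul_of_nonneg_left hmono hβ]
end
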